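/- Let n ≥ 2. Define B̂ = { x ∈ ℝⁿ : xᵢ ≥ 0 for all i, and ‖x‖₁ < 1 } and B̆ = { x ∈ ℝⁿ : xᵢ ≥ 0 for all i, and ‖x‖₂ < 1 }, and define Ψ : B̂ → ℝⁿ by Ψ(x) = x if ‖x‖₁ ≤ 1/2, and Ψ(x) = ( ‖x‖₁⁻¹ − ‖x‖₂⁻¹ + 2‖x‖₁/‖x‖₂ − 1 ) · x if 1/2 < ‖x‖₁ < 1. Then Ψ is well-defined and continuous on B̂, is a bijection from B̂ onto B̆, and both Ψ and its inverse are Lipschitz continuous; in particular, Ψ is a bi-Lipschitz homeomorphism from the positive quadrant of the ℓ¹ unit ball onto the positive quadrant of the Euclidean unit ball, and Ψ is the identity on { x ∈ B̂ : ‖x‖₁ ≤ 1/2 }. -/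

import Mathlib

/-!
Write `s = ‖x‖₁` and `r = ‖x‖₂`.  On all of `ℝⁿ` the map equals
`Ψ(x) = x + max (2s - 1) 0 • (r⁻¹ - s⁻¹) • x`, and on each ray `s` is transformed affinely on
`s > 1/2`.  Solving for the inverse gives the explicit formula
`Ψ⁻¹(y) = y - max (2t - 1) 0 • ((t - ρ) / ((2t - ρ) t)) • y` with `t = ‖y‖₁`, `ρ = ‖y‖₂`
(`quadrantInv`).  That the two maps are mutually inverse and exchange the two quadrants is
scalar algebra in `s` and `r`, using `0 < r ≤ s`.

Both maps are Lipschitz on the Euclidean unit ball for the same reason.  On the part of the ball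
where `1/2 ≤ s`, the denominators `s`, `r ≥ s / n` and `2s - r ≥ s` are bounded below, so the
coefficients are bounded and Lipschitz (the calculus of `LipBdd`).  Where `s ≤ 1/2`, the cutoff
`max (2s - 1) 0` vanishes, and it is Lipschitz itself, so the product extends to a Lipschitz map
on the whole ball (`LipBdd.cutoff`).
-/

open scoped Classical

/-- The transformation from the positive quadrant of the `ℓ¹` unit ball onto the
positive quadrant of the Euclidean unit ball: the identity for `‖x‖₁ ≤ 1/2`, and
`( ‖x‖₁⁻¹ − ‖x‖₂⁻¹ + 2‖x‖₁/‖x‖₂ − 1 ) • x` for `1/2 < ‖x‖₁`. -/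
noncomputable def quadrantMap (n : ℕ) (x : EuclideanSpace ℝ (Fin n)) :
    EuclideanSpace ℝ (Fin n) :=
  if (∑ i, |x i|) ≤ 1 / 2 then x
  else ((∑ i, |x i|)⁻¹ - ‖x‖⁻¹ + 2 * (∑ i, |x i|) / ‖x‖ - 1) • x

/-- The positive quadrant of the `ℓ¹` unit ball. -/
def quadrantL1 (n : ℕ) : Set (EuclideanSpace ℝ (Fin n)) :=
  {x | (∀ i, 0 ≤ x i) ∧ ∑ i, |x i| < 1}

/-- The positive quadrant of the Euclidean unit ball. -/
def quadrantL2 (n : ℕ) : Set (EuclideanSpace ℝ (Fin n)) :=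
  {x | (∀ i, 0 ≤ x i) ∧ ‖x‖ < 1}

/-! ### Bounded Lipschitz maps -/

/-- `f` is bounded and Lipschitz on `A`, with a common constant for both bounds. -/
def LipBdd {E F : Type*} [NormedAddCommGroup E] [NormedAddCommGroup F]
    (A : Set E) (f : E → F) : Prop :=
  ∃ C : ℝ, 0 ≤ C ∧ (∀ x ∈ A, ‖f x‖ ≤ C) ∧ ∀ x ∈ A, ∀ y ∈ A, ‖f x - f y‖ ≤ C * ‖x - y‖

namespace LipBdd

variable {E F : Type*} [NormedAddCommGroup E] [NormedAddCommGroup F] {A : Set E}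

lemma add {f g : E → F} (hf : LipBdd A f) (hg : LipBdd A g) :
    LipBdd A (fun x => f x + g x) := by
  obtain ⟨C, hC, h1, h2⟩ := hf
  obtain ⟨D, hD, k1, k2⟩ := hg
  refine ⟨C + D, by positivity, fun x hx => ?_, fun x hx y hy => ?_⟩
  · exact (norm_add_le _ _).trans (add_le_add (h1 x hx) (k1 x hx))
  · calc ‖f x + g x - (f y + g y)‖ = ‖(f x - f y) + (g x - g y)‖ := by congr 1; abel
      _ ≤ ‖f x - f y‖ + ‖g x - g y‖ := norm_add_le _ _
      _ ≤ (C + D) * ‖x - y‖ := by linarith [h2 x hx y hy, k2 x hx y hy]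

lemma neg {f : E → F} (hf : LipBdd A f) : LipBdd A (fun x => - f x) := by
  obtain ⟨C, hC, h1, h2⟩ := hf
  refine ⟨C, hC, fun x hx => by simpa using h1 x hx, fun x hx y hy => ?_⟩
  rw [neg_sub_neg, norm_sub_rev]
  exact h2 x hx y hy

lemma sub {f g : E → F} (hf : LipBdd A f) (hg : LipBdd A g) :
    LipBdd A (fun x => f x - g x) := by
  simpa only [sub_eq_add_neg] using hf.add hg.neg

lemma smul [NormedSpace ℝ F] {f : E → ℝ} {g : E → F} (hf : LipBdd A f) (hg : LipBdd A g) :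
    LipBdd A (fun x => f x • g x) := by
  obtain ⟨C, hC, h1, h2⟩ := hf
  obtain ⟨D, hD, k1, k2⟩ := hg
  -- The bound needs `C * D`, the Lipschitz constant `2 * C * D`.
  refine ⟨2 * (C * D), by positivity, fun x hx => ?_, fun x hx y hy => ?_⟩
  · rw [norm_smul]
    have := mul_le_mul (h1 x hx) (k1 x hx) (norm_nonneg _) hC
    nlinarith [mul_nonneg hC hD]
  · have e : f x • g x - f y • g y = f x • (g x - g y) + (f x - f y) • g y := by
      rw [smul_sub, sub_smul]; abel
    rw [e]
    refine (norm_add_le _ _).trans ?_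
    rw [norm_smul, norm_smul]
    have a1 := mul_le_mul (h1 x hx) (k2 x hx y hy) (norm_nonneg _) hC
    have a2 := mul_le_mul (h2 x hx y hy) (k1 y hy) (norm_nonneg _)
      (mul_nonneg hC (norm_nonneg _))
    linarith

lemma inv {f : E → ℝ} (hf : LipBdd A f) {c : ℝ} (hc : 0 < c) (h : ∀ x ∈ A, c ≤ f x) :
    LipBdd A (fun x => (f x)⁻¹) := by
  obtain ⟨C, hC, h1, h2⟩ := hf
  refine ⟨max c⁻¹ (c⁻¹ * c⁻¹ * C), by positivity, fun x hx => ?_, fun x hx y hy => ?_⟩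
  · refine le_trans ?_ (le_max_left _ _)
    have : 0 < f x := hc.trans_le (h x hx)
    rw [Real.norm_of_nonneg (by positivity)]
    exact inv_anti₀ hc (h x hx)
  · have hx0 : 0 < f x := hc.trans_le (h x hx)
    have hy0 : 0 < f y := hc.trans_le (h y hy)
    have e : (f x)⁻¹ - (f y)⁻¹ = ((f x)⁻¹ * (f y)⁻¹) * (f y - f x) := by field_simp
    calc ‖(f x)⁻¹ - (f y)⁻¹‖ = ((f x)⁻¹ * (f y)⁻¹) * ‖f x - f y‖ := by
          rw [e, norm_mul, Real.norm_of_nonneg (by positivity), norm_sub_rev]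
      _ ≤ (c⁻¹ * c⁻¹) * (C * ‖x - y‖) := by
          gcongr
          · exact h x hx
          · exact h y hy
          · exact h2 x hx y hy
      _ = (c⁻¹ * c⁻¹ * C) * ‖x - y‖ := by ring
      _ ≤ _ := by gcongr; exact le_max_right _ _

/-- A cutoff `max φ 0` times a map that is controlled only where `0 ≤ φ` is controlled
everywhere: if `φ y < 0 ≤ φ x`, then `max (φ x) 0 ≤ φ x - φ y`. -/
lemma cutoff [NormedSpace ℝ F] {φ : E → ℝ} {g : E → F} (hφ : LipBdd A φ)
    (hg : LipBdd (A ∩ {x | 0 ≤ φ x}) g) :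
    LipBdd A (fun x => max (φ x) 0 • g x) := by
  have hsub : LipBdd (A ∩ {x | 0 ≤ φ x}) φ := by
    obtain ⟨C, hC, h1, h2⟩ := hφ
    exact ⟨C, hC, fun x hx => h1 x hx.1, fun x hx y hy => h2 x hx.1 y hy.1⟩
  obtain ⟨P, hP, p1, p2⟩ := hsub.smul hg
  obtain ⟨C, hC, h1, h2⟩ := hφ
  obtain ⟨D, hD, k1, k2⟩ := hg
  have mixed : ∀ x ∈ A, ∀ y ∈ A, 0 ≤ φ x → φ y < 0 →
      ‖φ x • g x‖ ≤ (P + C * D) * ‖x - y‖ := by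
    intro x hx y hy hx0 hy0
    rw [norm_smul, Real.norm_of_nonneg hx0]
    have a : φ x ≤ C * ‖x - y‖ := by
      have := (Real.le_norm_self _).trans (h2 x hx y hy)
      linarith
    have b := mul_le_mul a (k1 x ⟨hx, hx0⟩) (norm_nonneg _) (hx0.trans a)
    have := mul_nonneg hP (norm_nonneg (x - y))
    linarith
  have hCD := mul_nonneg hC hD
  refine ⟨P + C * D, by positivity, fun x hx => ?_, fun x hx y hy => ?_⟩
  · rcases le_or_gt 0 (φ x) with h | h
    · simp only [max_eq_left h]
      linarith [p1 x ⟨hx, h⟩]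
    · simp only [max_eq_right h.le, zero_smul, norm_zero]
      positivity
  · rcases le_or_gt 0 (φ x) with h | h <;> rcases le_or_gt 0 (φ y) with h' | h'
    · simp only [max_eq_left h, max_eq_left h']
      have := p2 x ⟨hx, h⟩ y ⟨hy, h'⟩
      have := mul_nonneg hCD (norm_nonneg (x - y))
      linarith
    · simpa only [max_eq_left h, max_eq_right h'.le, zero_smul, sub_zero] using
        mixed x hx y hy h h'
    · simp only [max_eq_left h', max_eq_right h.le, zero_smul, zero_sub, norm_neg]
      rw [norm_sub_rev]
      exact mixed y hy x hx h' h
    · simp only [max_eq_right h.le, max_eq_right h'.le, zero_smul, sub_self, norm_zero]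
      positivity

lemma mono {B : Set E} {f : E → F} (hf : LipBdd A f) (h : B ⊆ A) : LipBdd B f := by
  obtain ⟨C, hC, h1, h2⟩ := hf
  exact ⟨C, hC, fun x hx => h1 x (h hx), fun x hx y hy => h2 x (h hx) y (h hy)⟩

lemma lipschitz {f : E → F} (hf : LipBdd A f) : ∃ K : NNReal, LipschitzOnWith K f A := by
  obtain ⟨C, hC, h1, h2⟩ := hf
  refine ⟨⟨C, hC⟩, LipschitzOnWith.of_dist_le_mul fun x hx y hy => ?_⟩
  rw [dist_eq_norm, dist_eq_norm]
  exact h2 x hx y hy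

lemma const (c : F) : LipBdd A (fun _ => c) :=
  ⟨‖c‖, norm_nonneg _, fun _ _ => le_rfl, fun x _ y _ => by simp; positivity⟩

end LipBdd

/-! ### The `ℓ¹` norm -/

/-- The `ℓ¹` norm on `ℝⁿ`. -/
noncomputable def l1 {n : ℕ} (x : EuclideanSpace ℝ (Fin n)) : ℝ := ∑ i, |x i|

section L1

variable {n : ℕ}

lemma l1_smul {a : ℝ} (ha : 0 ≤ a) (x : EuclideanSpace ℝ (Fin n)) : l1 (a • x) = a * l1 x := by
  simp [l1, abs_mul, abs_of_nonneg ha, Finset.mul_sum]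

lemma l1_le (x : EuclideanSpace ℝ (Fin n)) : l1 x ≤ n * ‖x‖ := by
  have : ∀ i ∈ (Finset.univ : Finset (Fin n)), |x i| ≤ ‖x‖ := fun i _ => by
    simpa using PiLp.norm_apply_le x i
  simpa [l1] using Finset.sum_le_sum this

lemma norm_le_l1 (x : EuclideanSpace ℝ (Fin n)) : ‖x‖ ≤ l1 x := by
  have h0 : 0 ≤ l1 x := Finset.sum_nonneg fun i _ => abs_nonneg _
  rw [EuclideanSpace.norm_eq]
  refine Real.sqrt_le_iff.2 ⟨h0, ?_⟩
  simpa [l1] using Finset.sum_sq_le_sq_sum_of_nonneg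
    (s := Finset.univ) (f := fun i => |x i|) fun i _ => abs_nonneg _

lemma l1_sub_le (x y : EuclideanSpace ℝ (Fin n)) : |l1 x - l1 y| ≤ l1 (x - y) := by
  unfold l1
  rw [← Finset.sum_sub_distrib]
  refine (Finset.abs_sum_le_sum_abs _ _).trans (Finset.sum_le_sum fun i _ => ?_)
  simpa using abs_abs_sub_abs_le_abs_sub (x i) (y i)

lemma lipBdd_id : LipBdd {x : EuclideanSpace ℝ (Fin n) | ‖x‖ ≤ 1} (fun x => x) :=
  ⟨1, zero_le_one, fun _ hx => hx, fun x _ y _ => by simp⟩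

lemma lipBdd_norm : LipBdd {x : EuclideanSpace ℝ (Fin n) | ‖x‖ ≤ 1} (fun x => ‖x‖) :=
  ⟨1, zero_le_one, fun x hx => by simpa using hx,
    fun x _ y _ => by simpa using abs_norm_sub_norm_le x y⟩

lemma lipBdd_l1 : LipBdd {x : EuclideanSpace ℝ (Fin n) | ‖x‖ ≤ 1} l1 := by
  refine ⟨n, by positivity, fun x hx => ?_, fun x _ y _ => (l1_sub_le x y).trans (l1_le _)⟩
  have h0 : 0 ≤ l1 x := (norm_nonneg x).trans (norm_le_l1 x)
  rw [Real.norm_of_nonneg h0]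
  exact (l1_le x).trans (mul_le_of_le_one_right (by positivity) hx)

/-! ### The inverse and bijectivity -/

/-- The inverse transformation, in closed form. -/
noncomputable def quadrantInv (n : ℕ) (y : EuclideanSpace ℝ (Fin n)) :
    EuclideanSpace ℝ (Fin n) :=
  y - max (2 * l1 y - 1) 0 • (((l1 y - ‖y‖) * ((2 * l1 y - ‖y‖)⁻¹ * (l1 y)⁻¹)) • y)

lemma quadrantMap_eq (x : EuclideanSpace ℝ (Fin n)) :
    quadrantMap n x = x + max (2 * l1 x - 1) 0 • ((‖x‖⁻¹ - (l1 x)⁻¹) • x) := by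
  change (if l1 x ≤ 1 / 2 then x else ((l1 x)⁻¹ - ‖x‖⁻¹ + 2 * l1 x / ‖x‖ - 1) • x) = _
  split_ifs with h
  · rw [max_eq_right (by linarith), zero_smul, add_zero]
  · push Not at h
    have hs : 0 < l1 x := by linarith
    rw [max_eq_left (by linarith), smul_smul]
    have e : (l1 x)⁻¹ - ‖x‖⁻¹ + 2 * l1 x / ‖x‖ - 1 =
        1 + (2 * l1 x - 1) * (‖x‖⁻¹ - (l1 x)⁻¹) := by
      rw [div_eq_mul_inv]
      linear_combination 2 * mul_inv_cancel₀ hs.ne'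
    rw [e, add_smul, one_smul]

lemma quadrantMap_of_le {x : EuclideanSpace ℝ (Fin n)} (h : l1 x ≤ 1 / 2) :
    quadrantMap n x = x := if_pos h

lemma quadrantInv_of_le {x : EuclideanSpace ℝ (Fin n)} (h : l1 x ≤ 1 / 2) :
    quadrantInv n x = x := by
  rw [quadrantInv, max_eq_right (by linarith), zero_smul, sub_zero]

lemma norm_pos_of_l1 {x : EuclideanSpace ℝ (Fin n)} (h : 1 / 2 < l1 x) : 0 < ‖x‖ := by
  have := l1_le x
  by_contra h0
  have : ‖x‖ = 0 := le_antisymm (not_lt.1 h0) (norm_nonneg _)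
  simp_all
  linarith

/-- Outside the `ℓ¹` ball of radius `1/2`, `Ψ` is multiplication by a scalar `a ≥ 1`,
characterised by a polynomial identity. -/
lemma quadrantMap_of_gt {x : EuclideanSpace ℝ (Fin n)} (h : 1 / 2 < l1 x) :
    ∃ a : ℝ, 1 ≤ a ∧ quadrantMap n x = a • x ∧
      a * (‖x‖ * l1 x) = ‖x‖ * l1 x + (2 * l1 x - 1) * (l1 x - ‖x‖) := by
  have hr := norm_pos_of_l1 h
  have hs : 0 < l1 x := by linarith
  refine ⟨1 + (2 * l1 x - 1) * (‖x‖⁻¹ - (l1 x)⁻¹), ?_, ?_, ?_⟩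
  · have : (l1 x)⁻¹ ≤ ‖x‖⁻¹ := inv_anti₀ hr (norm_le_l1 x)
    have := mul_nonneg (show 0 ≤ 2 * l1 x - 1 by linarith) (sub_nonneg.2 this)
    linarith
  · rw [quadrantMap_eq, max_eq_left (by linarith), add_smul, one_smul, smul_smul]
  · field_simp

/-- Outside the `ℓ¹` ball of radius `1/2`, the inverse is multiplication by a positive
scalar `b`, characterised by a polynomial identity. -/
lemma quadrantInv_of_gt {y : EuclideanSpace ℝ (Fin n)} (h : 1 / 2 < l1 y) :
    ∃ b : ℝ, 0 < b ∧ quadrantInv n y = b • y ∧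
      b * ((2 * l1 y - ‖y‖) * l1 y) = ‖y‖ * l1 y + l1 y - ‖y‖ := by
  have hr := norm_pos_of_l1 h
  have hs : 0 < l1 y := by linarith
  have hd : 0 < 2 * l1 y - ‖y‖ := by linarith [norm_le_l1 y]
  have key : (1 - (2 * l1 y - 1) * ((l1 y - ‖y‖) * ((2 * l1 y - ‖y‖)⁻¹ * (l1 y)⁻¹))) *
      ((2 * l1 y - ‖y‖) * l1 y) = ‖y‖ * l1 y + l1 y - ‖y‖ := by
    field_simp
    ring
  refine ⟨_, ?_, ?_, key⟩
  · refine pos_of_mul_pos_left (b := (2 * l1 y - ‖y‖) * l1 y) ?_ (by positivity)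
    rw [key]
    have := mul_pos hr hs
    linarith [norm_le_l1 y]
  · rw [quadrantInv, max_eq_left (by linarith), smul_smul, sub_smul (1 : ℝ), one_smul]

lemma mapsTo_quadrantMap : Set.MapsTo (quadrantMap n) (quadrantL1 n) (quadrantL2 n) := by
  rintro x ⟨hx, hs1⟩
  change l1 x < 1 at hs1
  rcases le_or_gt (l1 x) (1 / 2) with h | h
  · rw [quadrantMap_of_le h]
    exact ⟨hx, (norm_le_l1 x).trans_lt hs1⟩
  · obtain ⟨a, ha, e, he⟩ := quadrantMap_of_gt h
    have hs : 0 < l1 x := by linarith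
    have ha0 : 0 ≤ a := by linarith
    rw [e]
    refine ⟨fun i => by simpa using mul_nonneg ha0 (hx i), ?_⟩
    rw [norm_smul, Real.norm_of_nonneg ha0]
    refine lt_of_mul_lt_mul_right (a := l1 x) ?_ hs.le
    nlinarith [mul_pos (show 0 < 2 * l1 x - ‖x‖ by linarith [norm_le_l1 x]) (sub_pos.2 hs1)]

lemma mapsTo_quadrantInv : Set.MapsTo (quadrantInv n) (quadrantL2 n) (quadrantL1 n) := by
  rintro y ⟨hy, hr1⟩
  rcases le_or_gt (l1 y) (1 / 2) with h | h
  · rw [quadrantInv_of_le h]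
    exact ⟨hy, h.trans_lt (by norm_num)⟩
  · obtain ⟨b, hb, e, he⟩ := quadrantInv_of_gt h
    have ht : 0 < l1 y := by linarith
    have hd : 0 < 2 * l1 y - ‖y‖ := by linarith [norm_le_l1 y]
    rw [e]
    refine ⟨fun i => by simpa using mul_nonneg hb.le (hy i), ?_⟩
    change l1 (b • y) < 1
    rw [l1_smul hb.le]
    refine lt_of_mul_lt_mul_right (a := 2 * l1 y - ‖y‖) ?_ hd.le
    nlinarith [mul_pos ht (sub_pos.2 hr1)]

lemma quadrantInv_quadrantMap (x : EuclideanSpace ℝ (Fin n)) :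
    quadrantInv n (quadrantMap n x) = x := by
  rcases le_or_gt (l1 x) (1 / 2) with h | h
  · rw [quadrantMap_of_le h, quadrantInv_of_le h]
  · obtain ⟨a, ha, e, he⟩ := quadrantMap_of_gt h
    have hs : 0 < l1 x := by linarith
    have ha0 : 0 < a := by linarith
    have hd : 0 < 2 * l1 x - ‖x‖ := by linarith [norm_le_l1 x]
    have hl : l1 (a • x) = a * l1 x := l1_smul ha0.le x
    have hn : ‖a • x‖ = a * ‖x‖ := by rw [norm_smul, Real.norm_of_nonneg ha0.le]
    obtain ⟨b, -, e', he'⟩ := quadrantInv_of_gt (y := a • x) (by rw [hl]; nlinarith)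
    rw [e, e', smul_smul]
    rw [hl, hn] at he'
    have hba : b * a = 1 := by
      refine mul_right_cancel₀ (b := a * ((2 * l1 x - ‖x‖) * l1 x)) (by positivity) ?_
      linear_combination he' + a * he
    rw [hba, one_smul]

lemma quadrantMap_quadrantInv (y : EuclideanSpace ℝ (Fin n)) :
    quadrantMap n (quadrantInv n y) = y := by
  rcases le_or_gt (l1 y) (1 / 2) with h | h
  · rw [quadrantInv_of_le h, quadrantMap_of_le h]
  · obtain ⟨b, hb, e, he⟩ := quadrantInv_of_gt h
    have hr := norm_pos_of_l1 h
    have ht : 0 < l1 y := by linarith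
    have hd : 0 < 2 * l1 y - ‖y‖ := by linarith [norm_le_l1 y]
    have hl : l1 (b • y) = b * l1 y := l1_smul hb.le y
    have hn : ‖b • y‖ = b * ‖y‖ := by rw [norm_smul, Real.norm_of_nonneg hb.le]
    have hgt : 1 / 2 < l1 (b • y) := by
      rw [hl]
      refine lt_of_mul_lt_mul_right (a := 2 * l1 y - ‖y‖) ?_ hd.le
      nlinarith [mul_pos hr (sub_pos.2 h)]
    obtain ⟨a, -, e', he'⟩ := quadrantMap_of_gt hgt
    rw [e, e', smul_smul]
    rw [hl, hn] at he'
    have hab : a * b = 1 := by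
      refine mul_right_cancel₀ (b := b * (‖y‖ * l1 y)) (by positivity) ?_
      linear_combination he' + b * he
    rw [hab, one_smul]

/-! ### Lipschitz bounds -/

/-- The part of the unit ball on which the cutoff `2 * ‖x‖₁ - 1` is nonnegative. -/
def outerBall (n : ℕ) : Set (EuclideanSpace ℝ (Fin n)) :=
  {x | ‖x‖ ≤ 1} ∩ {x | 0 ≤ 2 * l1 x - 1}

lemma lipBdd_inv_l1 : LipBdd (outerBall n) (fun x => (l1 x)⁻¹) :=
  (lipBdd_l1.mono Set.inter_subset_left).inv (c := 1 / 2) (by norm_num) fun x hx => by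
    have : 0 ≤ 2 * l1 x - 1 := hx.2
    linarith

lemma lipBdd_inv_norm : LipBdd (outerBall n) (fun x => ‖x‖⁻¹) :=
  -- The bound is `1 / (2 * n)`, shifted to stay positive for `n = 0`.
  (lipBdd_norm.mono Set.inter_subset_left).inv (c := 1 / (2 * (n + 1))) (by positivity)
    fun x hx => by
      have h : 0 ≤ 2 * l1 x - 1 := hx.2
      rw [div_le_iff₀ (by positivity)]
      nlinarith [l1_le x, norm_nonneg x]

lemma lipBdd_two_mul_l1 :
    LipBdd {x : EuclideanSpace ℝ (Fin n) | ‖x‖ ≤ 1} (fun x => 2 * l1 x) :=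
  (LipBdd.const (2 : ℝ)).smul lipBdd_l1

lemma lipBdd_quadrantMap : LipBdd {x | ‖x‖ ≤ 1} (quadrantMap n) := by
  rw [show quadrantMap n = _ from funext quadrantMap_eq]
  refine lipBdd_id.add (LipBdd.cutoff (lipBdd_two_mul_l1.sub (LipBdd.const 1)) ?_)
  exact (lipBdd_inv_norm.sub lipBdd_inv_l1).smul (lipBdd_id.mono Set.inter_subset_left)

lemma lipBdd_quadrantInv : LipBdd {x | ‖x‖ ≤ 1} (quadrantInv n) := by
  refine lipBdd_id.sub (LipBdd.cutoff (lipBdd_two_mul_l1.sub (LipBdd.const 1)) ?_)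
  refine LipBdd.smul ?_ (lipBdd_id.mono Set.inter_subset_left)
  have hd : LipBdd (outerBall n) (fun x => (2 * l1 x - ‖x‖)⁻¹) :=
    ((lipBdd_two_mul_l1.sub lipBdd_norm).mono Set.inter_subset_left).inv
      (c := 1 / 2) (by norm_num) fun x hx => by
        have : 0 ≤ 2 * l1 x - 1 := hx.2
        linarith [norm_le_l1 x]
  exact ((lipBdd_l1.sub lipBdd_norm).mono Set.inter_subset_left).smul (hd.smul lipBdd_inv_l1)

end L1

/-- **The ball-quadrant transformation is bi-Lipschitz and is the identity near
the origin.**  For `n ≥ 2`, the map `Ψ` defined by `Ψ(x) = x` for `‖x‖₁ ≤ 1/2`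
and `Ψ(x) = (‖x‖₁⁻¹ − ‖x‖₂⁻¹ + 2‖x‖₁/‖x‖₂ − 1) • x` for `1/2 < ‖x‖₁ < 1` is
continuous on the positive quadrant `B̂` of the `ℓ¹` unit ball, a bijection of
`B̂` onto the positive quadrant `B̆` of the Euclidean unit ball, Lipschitz on `B̂`
with a Lipschitz inverse on `B̆`, and equals the identity on `{‖x‖₁ ≤ 1/2}`. -/
theorem quadrant_transformation_biLipschitz (n : ℕ) (hn : 2 ≤ n) :
    ContinuousOn (quadrantMap n) (quadrantL1 n) ∧
      Set.BijOn (quadrantMap n) (quadrantL1 n) (quadrantL2 n) ∧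
      (∃ K : NNReal, LipschitzOnWith K (quadrantMap n) (quadrantL1 n)) ∧
      (∃ g : EuclideanSpace ℝ (Fin n) → EuclideanSpace ℝ (Fin n),
        Set.InvOn g (quadrantMap n) (quadrantL1 n) (quadrantL2 n) ∧
        ∃ K' : NNReal, LipschitzOnWith K' g (quadrantL2 n)) ∧
      ∀ x ∈ quadrantL1 n, (∑ i, |x i|) ≤ 1 / 2 → quadrantMap n x = x := by
  have hL1 : quadrantL1 n ⊆ {x | ‖x‖ ≤ 1} := fun x hx => (norm_le_l1 x).trans hx.2.le
  have hL2 : quadrantL2 n ⊆ {x | ‖x‖ ≤ 1} := fun x hx => hx.2.le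
  have hinv : Set.InvOn (quadrantInv n) (quadrantMap n) (quadrantL1 n) (quadrantL2 n) :=
    ⟨fun x _ => quadrantInv_quadrantMap x, fun y _ => quadrantMap_quadrantInv y⟩
  obtain ⟨K, hK⟩ := (lipBdd_quadrantMap (n := n).mono hL1).lipschitz
  exact ⟨hK.continuousOn, hinv.bijOn mapsTo_quadrantMap mapsTo_quadrantInv, ⟨K, hK⟩,
    ⟨quadrantInv n, hinv, (lipBdd_quadrantInv.mono hL2).lipschitz⟩,
    fun x _ h => quadrantMap_of_le h⟩
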